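/- arXiv:1603.08750 — 3 statements merged into one kernel-verified Lean document; each statement's English description precedes it below -/
import Mathlib

section
/- Let λ > 0. There exist constants a, b > 0 (depending only on λ) such that for every function ω̃ : [0,1] × [0,∞) → ℝ that is three times continuously differentiable in x and once continuously differentiable in t and satisfies ω̃_t + ω̃_x + ω̃_{xxx} + λ ω̃ = 0 on [0,1] × [0,∞) with ω̃(0,t) = 0, ω̃(1,t) = 0 and ω̃_x(1,t) = 0 for all t ≥ 0, one has for every t ≥ 0: |ω̃_{xx}(1,t)|² ≤ a ‖ω̃(·,t)‖²_{L²} + b ‖ω̃_t(·,t)‖²_{L²}. -/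
open MeasureTheory

noncomputable section

/-- The `L²(0,1)` norm. -/
def L2norm (f : ℝ → ℝ) : ℝ := (∫ x in (0:ℝ)..1, f x ^ 2) ^ (1/2 : ℝ)

theorem L2norm_sq (f : ℝ → ℝ) : L2norm f ^ 2 = ∫ x in (0:ℝ)..1, f x ^ 2 := by
  have h : 0 ≤ ∫ x in (0:ℝ)..1, f x ^ 2 :=
    intervalIntegral.integral_nonneg zero_le_one fun x _ => sq_nonneg (f x)
  rw [L2norm, ← Real.sqrt_eq_rpow, Real.sq_sqrt h]

theorem sq_integral_le_integral_sq {g : ℝ → ℝ} (hg : Continuous g) :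
    (∫ x in (0:ℝ)..1, g x) ^ 2 ≤ ∫ x in (0:ℝ)..1, g x ^ 2 := by
  set c := ∫ x in (0:ℝ)..1, g x with hc
  have h : 0 ≤ ∫ x in (0:ℝ)..1, (g x - c) ^ 2 :=
    intervalIntegral.integral_nonneg zero_le_one fun x _ => sq_nonneg (g x - c)
  have e : ∫ x in (0:ℝ)..1, (g x - c) ^ 2 = (∫ x in (0:ℝ)..1, g x ^ 2) - c ^ 2 := by
    have e' : ∀ x, (g x - c) ^ 2 = g x ^ 2 - 2 * c * g x + c ^ 2 := fun x => by ring
    simp only [e']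
    rw [intervalIntegral.integral_add, intervalIntegral.integral_sub,
      intervalIntegral.integral_const_mul, ← hc, intervalIntegral.integral_const]
    · simp only [sub_zero, one_smul]
      ring
    all_goals exact Continuous.intervalIntegrable (by fun_prop) _ _
  linarith

/-- Testing `u_xxx + u_x` against `x ^ 2` isolates the trace of `u_xx` at `1`. -/
theorem iteratedDeriv_two_one_eq_integral {u : ℝ → ℝ} (hu : ContDiff ℝ 3 u)
    (h0 : u 0 = 0) (h1 : u 1 = 0) (h1' : deriv u 1 = 0) :
    iteratedDeriv 2 u 1 =
      ∫ x in (0:ℝ)..1, (x ^ 2 * (iteratedDeriv 3 u x + deriv u x) + 2 * x * u x) := by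
  have d0 (x : ℝ) : HasDerivAt u (deriv u x) x :=
    (hu.differentiable (by norm_num) x).hasDerivAt
  have d1 (x : ℝ) : HasDerivAt (deriv u) (iteratedDeriv 2 u x) x := by
    have h := (hu.differentiable_iteratedDeriv 1 (by norm_num) x).hasDerivAt
    rwa [← iteratedDeriv_succ, iteratedDeriv_one] at h
  have d2 (x : ℝ) : HasDerivAt (iteratedDeriv 2 u) (iteratedDeriv 3 u x) x := by
    have h := (hu.differentiable_iteratedDeriv 2 (by norm_num) x).hasDerivAt
    rwa [← iteratedDeriv_succ] at h
  have c0 : Continuous u := hu.continuous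
  have c1 : Continuous (deriv u) := hu.continuous_deriv (by norm_num)
  have c3 : Continuous (iteratedDeriv 3 u) := hu.continuous_iteratedDeriv 3 (by norm_num)
  rw [intervalIntegral.integral_eq_sub_of_hasDerivAt
    (f := fun x => x ^ 2 * iteratedDeriv 2 u x - 2 * x * deriv u x + 2 * u x + x ^ 2 * u x)]
  · simp [h0, h1, h1']
  · intro x _
    have p2 : HasDerivAt (fun y : ℝ => y ^ 2) (2 * x) x := by simpa using hasDerivAt_pow 2 x
    have p1 : HasDerivAt (fun y : ℝ => 2 * y) 2 x := by
      simpa using (hasDerivAt_id x).const_mul 2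
    convert (((p2.mul (d2 x)).sub (p1.mul (d1 x))).add ((d0 x).const_mul 2)).add
      (p2.mul (d0 x)) using 1
    · rfl
    · ring
  · exact Continuous.intervalIntegrable (by fun_prop) _ _

/-- Trace estimate: for solutions of the target system
`ω̃_t + ω̃_x + ω̃_xxx + lam ω̃ = 0` with homogeneous boundary conditions,
`|ω̃_xx(1,t)|² ≤ a‖ω̃(·,t)‖²_{L²} + b‖ω̃_t(·,t)‖²_{L²}`. -/
theorem trace_estimate_target_system (lam : ℝ) (hlam : 0 < lam) :
    ∃ a > (0:ℝ), ∃ b > (0:ℝ),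
      ∀ w : ℝ → ℝ → ℝ,
        (∀ t : ℝ, ContDiff ℝ 3 fun x => w x t) →
        (∀ x : ℝ, ContDiff ℝ 1 fun t => w x t) →
        (∀ x ∈ Set.Icc (0:ℝ) 1, ∀ t ≥ (0:ℝ),
          deriv (fun t' => w x t') t + deriv (fun x' => w x' t) x
            + iteratedDeriv 3 (fun x' => w x' t) x + lam * w x t = 0) →
        (∀ t ≥ (0:ℝ), w 0 t = 0) →
        (∀ t ≥ (0:ℝ), w 1 t = 0) →
        (∀ t ≥ (0:ℝ), deriv (fun x' => w x' t) 1 = 0) →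
        ∀ t ≥ (0:ℝ),
          |iteratedDeriv 2 (fun x' => w x' t) 1| ^ 2 ≤
            a * L2norm (fun x => w x t) ^ 2
            + b * L2norm (fun x => deriv (fun t' => w x t') t) ^ 2 := by
  refine ⟨2 * (2 + lam) ^ 2, by positivity, 2, by norm_num, ?_⟩
  intro w hx _ hpde h0 h1 h1' t ht
  have hu := hx t
  set u : ℝ → ℝ := fun x => w x t with hu_def
  have c0 : Continuous u := hu.continuous
  have c1 : Continuous (deriv u) := hu.continuous_deriv (by norm_num)
  have c3 : Continuous (iteratedDeriv 3 u) := hu.continuous_iteratedDeriv 3 (by norm_num)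
  set v : ℝ → ℝ := fun x => -(deriv u x + iteratedDeriv 3 u x + lam * u x) with hv_def
  have cv : Continuous v := by fun_prop
  have hv : ∫ x in (0:ℝ)..1, (deriv (fun t' => w x t') t) ^ 2 = ∫ x in (0:ℝ)..1, v x ^ 2 := by
    refine intervalIntegral.integral_congr fun x hx => ?_
    rw [Set.uIcc_of_le zero_le_one] at hx
    have h : deriv (fun t' => w x t') t = v x := by
      have := hpde x hx t ht
      simp only [hv_def, hu_def]
      linarith
    simp only [h]
  rw [sq_abs, L2norm_sq, L2norm_sq, hv,
    iteratedDeriv_two_one_eq_integral hu (h0 t ht) (h1 t ht) (h1' t ht)]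
  refine (sq_integral_le_integral_sq (by fun_prop)).trans ?_
  rw [← intervalIntegral.integral_const_mul, ← intervalIntegral.integral_const_mul,
    ← intervalIntegral.integral_add (Continuous.intervalIntegrable (by fun_prop) _ _)
      (Continuous.intervalIntegrable (by fun_prop) _ _)]
  refine intervalIntegral.integral_mono_on zero_le_one
    (Continuous.intervalIntegrable (by fun_prop) _ _)
    (Continuous.intervalIntegrable (by fun_prop) _ _) fun x hx => ?_
  obtain ⟨hx0, hx1⟩ := hx
  have e : x ^ 2 * (iteratedDeriv 3 u x + deriv u x) + 2 * x * u x
      = (2 * x - lam * x ^ 2) * u x - x ^ 2 * v x := by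
    simp only [hv_def]
    ring
  have hx2 : x ^ 2 ≤ 1 := pow_le_one₀ hx0 hx1
  have hp : (2 * x - lam * x ^ 2) ^ 2 ≤ (2 + lam) ^ 2 :=
    sq_le_sq' (by nlinarith) (by nlinarith [mul_nonneg hlam.le (sq_nonneg x)])
  have hq : (x ^ 2) ^ 2 ≤ 1 := pow_le_one₀ (sq_nonneg x) hx2
  rw [e]
  calc ((2 * x - lam * x ^ 2) * u x - x ^ 2 * v x) ^ 2
      ≤ 2 * ((2 * x - lam * x ^ 2) ^ 2 * u x ^ 2) + 2 * ((x ^ 2) ^ 2 * v x ^ 2) := by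
        nlinarith [sq_nonneg ((2 * x - lam * x ^ 2) * u x + x ^ 2 * v x)]
    _ ≤ 2 * ((2 + lam) ^ 2 * u x ^ 2) + 2 * (1 * v x ^ 2) := by gcongr
    _ = 2 * (2 + lam) ^ 2 * u x ^ 2 + 2 * v x ^ 2 := by ring
end
end

section
/- Let λ > 0. There exist constants K₁, K₂ > 0 (depending only on λ) such that for every function ω̃ : [0,1] × [0,∞) → ℝ that is three times continuously differentiable in x and once continuously differentiable in t and satisfies ω̃_t + ω̃_x + ω̃_{xxx} + λ ω̃ = 0 on [0,1] × [0,∞) with ω̃(0,t) = 0, ω̃(1,t) = 0 and ω̃_x(1,t) = 0 for all t ≥ 0, one has for every t ≥ 0 both ‖ω̃_t(·,t)‖_{L²} ≤ K₁ ‖ω̃_{xxx}(·,t)‖_{L²} and ‖ω̃_{xxx}(·,t)‖_{L²} ≤ K₂ ‖ω̃_t(·,t)‖_{L²}. -/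
open MeasureTheory

noncomputable section

open Set Interval in
/-- Poincaré inequality on `[0,1]` for a `C¹` function vanishing somewhere in the interval. -/
lemma integral_sq_le_integral_deriv_sq {f f' : ℝ → ℝ} (hf : ∀ x, HasDerivAt f (f' x) x)
    (hf' : Continuous f') {d : ℝ} (hd : d ∈ Icc (0:ℝ) 1) (hfd : f d = 0) :
    ∫ x in (0:ℝ)..1, f x ^ 2 ≤ ∫ x in (0:ℝ)..1, f' x ^ 2 := by
  have hfc : Continuous f := continuous_iff_continuousAt.2 fun x => (hf x).continuousAt
  set M := ∫ x in (0:ℝ)..1, |f' x| with hM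
  have hM2 : M ^ 2 ≤ ∫ x in (0:ℝ)..1, f' x ^ 2 := by
    have h0 : 0 ≤ ∫ x in (0:ℝ)..1, (|f' x| - M) ^ 2 :=
      intervalIntegral.integral_nonneg zero_le_one fun x _ => sq_nonneg _
    have h1 : ∫ x in (0:ℝ)..1, (|f' x| - M) ^ 2
        = (∫ x in (0:ℝ)..1, f' x ^ 2) - 2 * M * M + M ^ 2 := by
      have : ∀ x, (|f' x| - M) ^ 2 = f' x ^ 2 - 2 * M * |f' x| + M ^ 2 := fun x => by
        rw [← sq_abs (f' x)]; ring
      simp_rw [this]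
      rw [intervalIntegral.integral_add, intervalIntegral.integral_sub,
        intervalIntegral.integral_const_mul, ← hM]
      · simp
      all_goals exact Continuous.intervalIntegrable (by fun_prop) _ _
    nlinarith
  have hpt : ∀ x ∈ Icc (0:ℝ) 1, f x ^ 2 ≤ M ^ 2 := by
    intro x hx
    have hFTC : ∫ y in d..x, f' y = f x := by
      rw [intervalIntegral.integral_eq_sub_of_hasDerivAt (fun y _ => hf y)
        (hf'.intervalIntegrable _ _), hfd,
        sub_zero]
    have hsub : Ι d x ⊆ Ι (0:ℝ) 1 := by
      rw [uIoc_of_le zero_le_one]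
      exact Ioc_subset_Ioc (le_min hd.1 hx.1) (max_le hd.2 hx.2)
    have hle : |f x| ≤ M := by
      have := intervalIntegral.abs_integral_mono_interval (μ := volume) (f := fun y => |f' y|) hsub
        (Filter.Eventually.of_forall fun y => abs_nonneg _)
        (Continuous.intervalIntegrable (by fun_prop) _ _)
      calc |f x| = |∫ y in d..x, f' y| := by rw [hFTC]
        _ ≤ |(∫ y in d..x, |f' y|)| := by
          simpa only [Real.norm_eq_abs] using
            intervalIntegral.norm_integral_le_abs_integral_norm
              (f := f') (a := d) (b := x) (μ := volume)
        _ ≤ |M| := this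
        _ = M := abs_of_nonneg
          (intervalIntegral.integral_nonneg zero_le_one fun y _ => abs_nonneg _)
    exact sq_le_sq' (by linarith [neg_abs_le (f x)]) ((le_abs_self _).trans hle)
  calc ∫ x in (0:ℝ)..1, f x ^ 2 ≤ ∫ x in (0:ℝ)..1, M ^ 2 :=
        intervalIntegral.integral_mono_on zero_le_one
          (Continuous.intervalIntegrable (by fun_prop) _ _)
          (Continuous.intervalIntegrable (by fun_prop) _ _) hpt
    _ = M ^ 2 := by simp
    _ ≤ _ := hM2

/-- Integrating `(a + b + c)² ≤ 3 (a² + b² + c²)` over `[0,1]`. -/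
lemma integral_sq_add_three_le {a b c : ℝ → ℝ} (ha : Continuous a) (hb : Continuous b)
    (hc : Continuous c) :
    ∫ x in (0:ℝ)..1, (a x + b x + c x) ^ 2 ≤
      3 * ((∫ x in (0:ℝ)..1, a x ^ 2) + (∫ x in (0:ℝ)..1, b x ^ 2)
        + ∫ x in (0:ℝ)..1, c x ^ 2) := by
  rw [← intervalIntegral.integral_add, ← intervalIntegral.integral_add,
    ← intervalIntegral.integral_const_mul]
  · refine intervalIntegral.integral_mono_on zero_le_one
      (Continuous.intervalIntegrable (by fun_prop) _ _)
      (Continuous.intervalIntegrable (by fun_prop) _ _) fun x _ => ?_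
    nlinarith [sq_nonneg (a x - b x), sq_nonneg (a x - c x), sq_nonneg (b x - c x)]
  all_goals exact Continuous.intervalIntegrable (by fun_prop) _ _

/-- The operator `u ↦ u' + u''' + l u` is bounded by `u'''` in `L²(0,1)`. -/
lemma integral_sq_operator_le
    {u p q r : ℝ → ℝ} (hu : ∀ x, HasDerivAt u (p x) x) (hp : ∀ x, HasDerivAt p (q x) x)
    (hq : ∀ x, HasDerivAt q (r x) x) (hr : Continuous r)
    (hu0 : u 0 = 0) (hu1 : u 1 = 0) (hp1 : p 1 = 0) (l : ℝ) :
    ∫ x in (0:ℝ)..1, (p x + r x + l * u x) ^ 2 ≤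
      3 * (2 + l ^ 2) * ∫ x in (0:ℝ)..1, r x ^ 2 := by
  have huc : Continuous u := continuous_iff_continuousAt.2 fun x => (hu x).continuousAt
  have hpc : Continuous p := continuous_iff_continuousAt.2 fun x => (hp x).continuousAt
  have hqc : Continuous q := continuous_iff_continuousAt.2 fun x => (hq x).continuousAt
  obtain ⟨c, hc, hpc0⟩ := exists_hasDerivAt_eq_zero (f := u) (f' := p) zero_lt_one
    huc.continuousOn (hu0.trans hu1.symm) fun x _ => hu x
  obtain ⟨d, hd, hqd⟩ := exists_hasDerivAt_eq_zero (f := p) (f' := q) hc.2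
    hpc.continuousOn (hpc0.trans hp1.symm) fun x _ => hp x
  have hle₁ := integral_sq_le_integral_deriv_sq hu hpc (d := 0) (by simp) hu0
  have hle₂ := integral_sq_le_integral_deriv_sq hp hqc (d := 1) (by simp) hp1
  have hle₃ := integral_sq_le_integral_deriv_sq hq hr (d := d)
    ⟨(hc.1.trans hd.1).le, hd.2.le⟩ hqd
  have hsum := integral_sq_add_three_le hpc hr (huc.const_mul l)
  simp_rw [mul_pow, intervalIntegral.integral_const_mul] at hsum
  nlinarith [mul_le_mul_of_nonneg_left ((hle₁.trans hle₂).trans hle₃) (sq_nonneg l)]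

/-- Energy estimate with multiplier `u`. -/
lemma energy_estimate
    {u p q r : ℝ → ℝ} (hu : ∀ x, HasDerivAt u (p x) x) (hp : ∀ x, HasDerivAt p (q x) x)
    (hq : ∀ x, HasDerivAt q (r x) x) (hr : Continuous r)
    (hu0 : u 0 = 0) (hu1 : u 1 = 0) (hp1 : p 1 = 0) {l : ℝ} (hl : 0 < l) :
    l ^ 2 * ∫ x in (0:ℝ)..1, u x ^ 2 ≤ ∫ x in (0:ℝ)..1, (p x + r x + l * u x) ^ 2 := by
  have huc : Continuous u := continuous_iff_continuousAt.2 fun x => (hu x).continuousAt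
  have hpc : Continuous p := continuous_iff_continuousAt.2 fun x => (hp x).continuousAt
  have hFTC : ∫ x in (0:ℝ)..1, (u x * r x + u x * p x) = p 0 ^ 2 / 2 := by
    rw [intervalIntegral.integral_eq_sub_of_hasDerivAt
      (f := fun x => u x * q x - p x ^ 2 / 2 + u x ^ 2 / 2)
      (fun x _ => ?_) (Continuous.intervalIntegrable (by fun_prop) _ _)]
    · simp [hu0, hu1, hp1]
    · refine ((((hu x).mul (hq x)).sub (((hp x).pow 2).div_const 2)).add
        (((hu x).pow 2).div_const 2)).congr_deriv ?_
      norm_num; ring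
  have hmono : ∫ x in (0:ℝ)..1, 2 * l * (u x * r x + u x * p x) ≤
      ∫ x in (0:ℝ)..1, ((p x + r x + l * u x) ^ 2 - l ^ 2 * u x ^ 2) := by
    refine intervalIntegral.integral_mono_on zero_le_one
      (Continuous.intervalIntegrable (by fun_prop) _ _)
      (Continuous.intervalIntegrable (by fun_prop) _ _) fun x _ => ?_
    nlinarith [sq_nonneg (p x + r x)]
  rw [intervalIntegral.integral_const_mul, hFTC, intervalIntegral.integral_sub,
    intervalIntegral.integral_const_mul] at hmono
  · nlinarith [mul_nonneg hl.le (sq_nonneg (p 0))]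
  all_goals exact Continuous.intervalIntegrable (by fun_prop) _ _

/-- Kato smoothing estimate with multiplier `x u`. -/
lemma smoothing_estimate
    {u p q r : ℝ → ℝ} (hu : ∀ x, HasDerivAt u (p x) x) (hp : ∀ x, HasDerivAt p (q x) x)
    (hq : ∀ x, HasDerivAt q (r x) x) (hr : Continuous r)
    (hu0 : u 0 = 0) (hu1 : u 1 = 0) (hp1 : p 1 = 0) {l : ℝ} (hl : 0 < l) :
    3 * ∫ x in (0:ℝ)..1, p x ^ 2 ≤ 2 * (∫ x in (0:ℝ)..1, u x ^ 2)
      + ∫ x in (0:ℝ)..1, (p x + r x + l * u x) ^ 2 := by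
  have huc : Continuous u := continuous_iff_continuousAt.2 fun x => (hu x).continuousAt
  have hpc : Continuous p := continuous_iff_continuousAt.2 fun x => (hp x).continuousAt
  have hFTC : ∫ x in (0:ℝ)..1,
      (x * (u x * r x + u x * p x) - 3 / 2 * p x ^ 2 + u x ^ 2 / 2) = 0 := by
    rw [intervalIntegral.integral_eq_sub_of_hasDerivAt
      (f := fun x => x * (u x * q x - p x ^ 2 / 2 + u x ^ 2 / 2) - u x * p x)
      (fun x _ => ?_) (Continuous.intervalIntegrable (by fun_prop) _ _)]
    · simp [hu0, hu1, hp1]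
    · refine (((hasDerivAt_id x).mul ((((hu x).mul (hq x)).sub
        (((hp x).pow 2).div_const 2)).add (((hu x).pow 2).div_const 2))).sub
        ((hu x).mul (hp x))).congr_deriv ?_
      norm_num; ring
  have hmono : ∫ x in (0:ℝ)..1,
      2 * (x * (u x * r x + u x * p x) - 3 / 2 * p x ^ 2 + u x ^ 2 / 2) ≤
      ∫ x in (0:ℝ)..1, (2 * u x ^ 2 + (p x + r x + l * u x) ^ 2 - 3 * p x ^ 2) := by
    refine intervalIntegral.integral_mono_on zero_le_one
      (Continuous.intervalIntegrable (by fun_prop) _ _)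
      (Continuous.intervalIntegrable (by fun_prop) _ _) fun x hx => ?_
    have h₁ : 0 ≤ x * (l * u x ^ 2) := mul_nonneg hx.1 (by positivity)
    have h₂ : 0 ≤ (1 - x ^ 2) * u x ^ 2 :=
      mul_nonneg (by nlinarith [hx.1, hx.2]) (sq_nonneg _)
    nlinarith [sq_nonneg (x * u x - (p x + r x + l * u x))]
  rw [intervalIntegral.integral_const_mul, hFTC, intervalIntegral.integral_sub,
    intervalIntegral.integral_add, intervalIntegral.integral_const_mul,
    intervalIntegral.integral_const_mul] at hmono
  · linarith
  all_goals exact Continuous.intervalIntegrable (by fun_prop) _ _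

/-- `u'''` is bounded by `u' + u''' + l u` in `L²(0,1)`. -/
lemma integral_sq_third_deriv_le
    {u p q r : ℝ → ℝ} (hu : ∀ x, HasDerivAt u (p x) x) (hp : ∀ x, HasDerivAt p (q x) x)
    (hq : ∀ x, HasDerivAt q (r x) x) (hr : Continuous r)
    (hu0 : u 0 = 0) (hu1 : u 1 = 0) (hp1 : p 1 = 0) {l : ℝ} (hl : 0 < l) :
    ∫ x in (0:ℝ)..1, r x ^ 2 ≤
      (7 + 2 / l ^ 2) * ∫ x in (0:ℝ)..1, (p x + r x + l * u x) ^ 2 := by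
  have huc : Continuous u := continuous_iff_continuousAt.2 fun x => (hu x).continuousAt
  have hpc : Continuous p := continuous_iff_continuousAt.2 fun x => (hp x).continuousAt
  have hE := energy_estimate hu hp hq hr hu0 hu1 hp1 hl
  have hS := smoothing_estimate hu hp hq hr hu0 hu1 hp1 hl
  have hsum := integral_sq_add_three_le (a := fun x => p x + r x + l * u x)
    (b := fun x => -p x) (c := fun x => -l * u x) (by fun_prop) (by fun_prop) (by fun_prop)
  have hr_eq : ∀ x, p x + r x + l * u x + -p x + -l * u x = r x := fun x => by ring
  simp_rw [hr_eq, mul_pow, neg_sq, intervalIntegral.integral_const_mul] at hsum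
  set H := ∫ x in (0:ℝ)..1, (p x + r x + l * u x) ^ 2
  have hU : ∫ x in (0:ℝ)..1, u x ^ 2 ≤ H / l ^ 2 := by
    rw [le_div_iff₀ (by positivity)]; linarith
  have : (7 + 2 / l ^ 2) * H = 7 * H + 2 * (H / l ^ 2) := by ring
  linarith

lemma L2norm_le_of_integral_sq_le {f g : ℝ → ℝ} {C : ℝ} (hC : 0 ≤ C)
    (h : ∫ x in (0:ℝ)..1, f x ^ 2 ≤ C * ∫ x in (0:ℝ)..1, g x ^ 2) :
    L2norm f ≤ √C * L2norm g := by
  unfold L2norm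
  rw [← Real.sqrt_eq_rpow, ← Real.sqrt_eq_rpow, ← Real.sqrt_mul hC]
  exact Real.sqrt_le_sqrt h

/-- Norm equivalence: for solutions of the target system
`ω̃_t + ω̃_x + ω̃_xxx + lam ω̃ = 0` with homogeneous boundary conditions, the norms
`‖ω̃_t(·,t)‖_{L²}` and `‖ω̃_xxx(·,t)‖_{L²}` are equivalent. -/
theorem time_derivative_norm_equivalence (lam : ℝ) (hlam : 0 < lam) :
    ∃ K₁ > (0:ℝ), ∃ K₂ > (0:ℝ),
      ∀ w : ℝ → ℝ → ℝ,
        (∀ t : ℝ, ContDiff ℝ 3 fun x => w x t) →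
        (∀ x : ℝ, ContDiff ℝ 1 fun t => w x t) →
        (∀ x ∈ Set.Icc (0:ℝ) 1, ∀ t ≥ (0:ℝ),
          deriv (fun t' => w x t') t + deriv (fun x' => w x' t) x
            + iteratedDeriv 3 (fun x' => w x' t) x + lam * w x t = 0) →
        (∀ t ≥ (0:ℝ), w 0 t = 0) →
        (∀ t ≥ (0:ℝ), w 1 t = 0) →
        (∀ t ≥ (0:ℝ), deriv (fun x' => w x' t) 1 = 0) →
        ∀ t ≥ (0:ℝ),
          L2norm (fun x => deriv (fun t' => w x t') t) ≤
            K₁ * L2norm (fun x => iteratedDeriv 3 (fun x' => w x' t) x) ∧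
          L2norm (fun x => iteratedDeriv 3 (fun x' => w x' t) x) ≤
            K₂ * L2norm (fun x => deriv (fun t' => w x t') t) := by
  refine ⟨√(3 * (2 + lam ^ 2)), by positivity, √(7 + 2 / lam ^ 2), by positivity,
    fun w hw _ heq h0 h1 hx1 t ht => ?_⟩
  set u : ℝ → ℝ := fun x => w x t
  have hu3 : ContDiff ℝ 3 u := hw t
  have hderiv : ∀ k < 3, ∀ x,
      HasDerivAt (iteratedDeriv k u) (iteratedDeriv (k + 1) u x) x := fun k hk x => by
    rw [iteratedDeriv_succ]
    exact (hu3.differentiable_iteratedDeriv k (by exact_mod_cast hk) x).hasDerivAt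
  have hd₀ : ∀ x, HasDerivAt u (deriv u x) x := fun x => by
    simpa [iteratedDeriv_one] using hderiv 0 (by norm_num) x
  have hd₁ : ∀ x, HasDerivAt (deriv u) (iteratedDeriv 2 u x) x := fun x => by
    simpa [iteratedDeriv_one] using hderiv 1 (by norm_num) x
  have hd₂ : ∀ x, HasDerivAt (iteratedDeriv 2 u) (iteratedDeriv 3 u x) x :=
    hderiv 2 (by norm_num)
  have hc : Continuous (iteratedDeriv 3 u) := hu3.continuous_iteratedDeriv 3 le_rfl
  have hint : ∫ x in (0:ℝ)..1, (deriv (fun t' => w x t') t) ^ 2 =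
      ∫ x in (0:ℝ)..1, (deriv u x + iteratedDeriv 3 u x + lam * u x) ^ 2 := by
    refine intervalIntegral.integral_congr fun x hx => ?_
    rw [Set.uIcc_of_le zero_le_one] at hx
    have hval : deriv (fun t' => w x t') t =
        -(deriv u x + iteratedDeriv 3 u x + lam * u x) := by
      linarith [heq x hx t ht]
    simp only [hval, neg_sq]
  constructor <;> refine L2norm_le_of_integral_sq_le (by positivity) ?_ <;> rw [hint]
  · exact integral_sq_operator_le hd₀ hd₁ hd₂ hc (h0 t ht) (h1 t ht) (hx1 t ht) lam
  · exact integral_sq_third_deriv_le hd₀ hd₁ hd₂ hc (h0 t ht) (h1 t ht) (hx1 t ht) hlam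
end
end

section
/- Let μ, C > 0 and let μ₀ satisfy 0 < μ₀ < μ. Let W : [0,∞) → [0,∞) be continuously differentiable with W'(t) ≤ −μ W(t) + C W(t)^{3/2} for all t ≥ 0. Set δ₀ = ((μ − μ₀)/C)². If W(0) < δ₀, then W(t) < δ₀ for all t ≥ 0 and W(t) ≤ W(0) e^{−μ₀ t} for all t ≥ 0. -/
/-- Below the threshold `((μ - μ₀) / C)²` the superlinear term costs at most the rate `μ - μ₀`. -/
lemma neg_mul_add_mul_rpow_le {μ C μ₀ w : ℝ} (hC : 0 < C) (hμ₀μ : μ₀ < μ) (hw : 0 ≤ w)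
    (hwδ : w ≤ ((μ - μ₀) / C) ^ 2) :
    -μ * w + C * w ^ (3 / 2 : ℝ) ≤ -μ₀ * w := by
  have hsqrt : √w ≤ (μ - μ₀) / C :=
    Real.sqrt_le_iff.mpr ⟨(div_pos (sub_pos.mpr hμ₀μ) hC).le, hwδ⟩
  have hpow : w ^ (3 / 2 : ℝ) = w * √w := by
    rw [show (3 / 2 : ℝ) = 1 + 1 / 2 by norm_num,
      Real.rpow_add_of_nonneg hw zero_le_one (by norm_num), Real.rpow_one, Real.sqrt_eq_rpow]
  rw [le_div_iff₀ hC] at hsqrt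
  rw [hpow]
  nlinarith [mul_le_mul_of_nonneg_left hsqrt hw]

/-- Linear differential inequality: `W' ≤ -k W` on `[0, ∞)` gives exponential decay at rate `k`. -/
lemma le_mul_exp_of_deriv_le {k : ℝ} {W : ℝ → ℝ} (hW : Differentiable ℝ W)
    (hderiv : ∀ t ≥ (0 : ℝ), deriv W t ≤ -k * W t) {t : ℝ} (ht : 0 ≤ t) :
    W t ≤ W 0 * Real.exp (-k * t) := by
  have hd (s : ℝ) : HasDerivAt (fun s => W s * Real.exp (k * s))
      (deriv W s * Real.exp (k * s) + W s * (Real.exp (k * s) * k)) s := by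
    have hlin : HasDerivAt (fun s : ℝ => k * s) k s := by
      simpa using (hasDerivAt_id s).const_mul k
    exact (hW s).hasDerivAt.mul hlin.exp
  have hanti : AntitoneOn (fun s => W s * Real.exp (k * s)) (Set.Ici 0) := by
    refine antitoneOn_of_deriv_nonpos (convex_Ici 0)
      (fun s _ => (hd s).continuousAt.continuousWithinAt)
      (fun s _ => (hd s).differentiableAt.differentiableWithinAt) fun s hs => ?_
    rw [interior_Ici] at hs
    rw [(hd s).deriv]
    nlinarith [mul_le_mul_of_nonneg_right (hderiv s (le_of_lt hs)) (Real.exp_pos (k * s)).le]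
  have h := hanti Set.self_mem_Ici ht ht
  simp only [mul_zero, Real.exp_zero, mul_one] at h
  rwa [neg_mul, Real.exp_neg, ← div_eq_mul_inv, le_div_iff₀ (Real.exp_pos _)]

/-- Comparison lemma: if `W' ≤ -μ W + C W^{3/2}` and `W(0) < δ₀ = ((μ-μ₀)/C)²`,
then `W` stays below `δ₀` and decays at the rate `μ₀`. -/
theorem lyapunov_comparison_lemma (μ C μ₀ : ℝ) (hμ : 0 < μ) (hC : 0 < C)
    (hμ₀ : 0 < μ₀) (hμ₀μ : μ₀ < μ)
    (W : ℝ → ℝ) (hW : ContDiff ℝ 1 W)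
    (hWnonneg : ∀ t ≥ (0:ℝ), 0 ≤ W t)
    (hWineq : ∀ t ≥ (0:ℝ), deriv W t ≤ -μ * W t + C * W t ^ (3/2 : ℝ))
    (δ₀ : ℝ) (hδ₀ : δ₀ = ((μ - μ₀) / C) ^ 2)
    (hW0 : W 0 < δ₀) :
    (∀ t ≥ (0:ℝ), W t < δ₀) ∧ (∀ t ≥ (0:ℝ), W t ≤ W 0 * Real.exp (-μ₀ * t)) := by
  have hdiff : Differentiable ℝ W := hW.differentiable one_ne_zero
  have hlt : ∀ t ≥ (0 : ℝ), W t < δ₀ := by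
    intro t ht
    obtain ⟨m, hW0m, hmδ⟩ := exists_between hW0
    have hm : 0 < m := (hWnonneg 0 le_rfl).trans_lt hW0m
    refine lt_of_le_of_lt ?_ hmδ
    refine image_le_of_deriv_right_lt_deriv_boundary' (f := W) (f' := deriv W) (a := 0) (b := t)
      (B := fun _ => m) (B' := fun _ => 0) hdiff.continuous.continuousOn
      (fun x _ => (hdiff x).hasDerivAt.hasDerivWithinAt) hW0m.le continuousOn_const
      (fun x _ => hasDerivWithinAt_const _ _ _) (fun x hx hWx => ?_) ⟨ht, le_rfl⟩
    have hdecay := (hWineq x hx.1).trans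
      (neg_mul_add_mul_rpow_le hC hμ₀μ (hWnonneg x hx.1) (by rw [hWx, ← hδ₀]; exact hmδ.le))
    rw [hWx] at hdecay
    nlinarith [mul_pos hμ₀ hm]
  refine ⟨hlt, fun t ht => le_mul_exp_of_deriv_le hdiff (fun s hs => ?_) ht⟩
  exact (hWineq s hs).trans
    (neg_mul_add_mul_rpow_le hC hμ₀μ (hWnonneg s hs) (hδ₀ ▸ (hlt s hs).le))
end
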